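/- Let L be the set of pairs (a,b) of the forms (φ_{k−2ε}, φ_{k−2ε} − 4φ_k) with k ≥ 3, ε = ±1, and (ψ_{k−2ε}, ψ_{k−2ε} − 4ψ_k) with k ≥ 0, ε = ±1, (k,ε) ∉ {(0,−1), (1,−1)}. If (a₁,b₁), (a₂,b₂) ∈ L and (a₁,b₁) ≠ (a₂,b₂), then the Lehmer pair associated with (a₁,b₁) and the Lehmer pair associated with (a₂,b₂) are not equivalent. -/

import Mathlib

open Complex

/-- A fixed choice of complex square root of an integer. -/
noncomputable def csqrt (a : ℤ) : ℂ := (a : ℂ) ^ ((1 : ℂ) / 2)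

/-- First component of the Lehmer pair associated with `(a, b)`: `(√a - √b)/2`. -/
noncomputable def assocFst (a b : ℤ) : ℂ := (csqrt a - csqrt b) / 2

/-- Second component of the Lehmer pair associated with `(a, b)`: `(√a + √b)/2`. -/
noncomputable def assocSnd (a b : ℤ) : ℂ := (csqrt a + csqrt b) / 2

/-- `(α, β)` is a Lehmer pair: `α`, `β` are algebraic integers, `(α+β)^2` and `αβ` are
nonzero coprime rational integers, and `α/β` is not a root of unity. -/
def IsLehmerPair (α β : ℂ) : Prop :=
  IsIntegral ℤ α ∧ IsIntegral ℤ β ∧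
  (∃ p q : ℤ, ((α + β) ^ 2 = (p : ℂ)) ∧ (α * β = (q : ℂ)) ∧ p ≠ 0 ∧ q ≠ 0 ∧ IsCoprime p q) ∧
  ¬ ∃ n : ℕ, 0 < n ∧ (α / β) ^ n = 1

/-- The Lehmer numbers `ũ_n(α, β)`. -/
noncomputable def lehmerU (α β : ℂ) (n : ℕ) : ℂ :=
  if Odd n then (α ^ n - β ^ n) / (α - β) else (α ^ n - β ^ n) / (α ^ 2 - β ^ 2)

/-- `z` is an integer divisible by `ℓ`. -/
def IntDvd (ℓ : ℕ) (z : ℂ) : Prop := ∃ m : ℤ, (m : ℂ) = z ∧ (ℓ : ℤ) ∣ m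

/-- `ℓ` is a primitive divisor of `ũ_n(α, β)`: `ℓ` is a prime dividing `ũ_n(α, β)` but not
dividing `(α^2 - β^2)^2 ũ_1(α,β) ⋯ ũ_{n-1}(α,β)`. -/
def IsPrimitiveDivisor (ℓ : ℕ) (n : ℕ) (α β : ℂ) : Prop :=
  ℓ.Prime ∧ IntDvd ℓ (lehmerU α β n) ∧
  ¬ IntDvd ℓ ((α ^ 2 - β ^ 2) ^ 2 * ∏ i ∈ Finset.Ico 1 n, lehmerU α β i)

/-- `(α, β)` is an `n`-defective Lehmer pair: a Lehmer pair such that `ũ_n(α, β)` has no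
primitive divisor. -/
def IsDefective (n : ℕ) (α β : ℂ) : Prop :=
  IsLehmerPair α β ∧ ∀ ℓ : ℕ, ¬ IsPrimitiveDivisor ℓ n α β

/-- Two Lehmer pairs `(α₁, β₁)` and `(α₂, β₂)` are equivalent if
`α₁/α₂ = β₁/β₂ ∈ {1, -1, i, -i}`. -/
def LehmerEquiv (α₁ β₁ α₂ β₂ : ℂ) : Prop :=
  ∃ c : ℂ, (c = 1 ∨ c = -1 ∨ c = Complex.I ∨ c = -Complex.I) ∧ α₁ = c * α₂ ∧ β₁ = c * β₂

/-- `phiAux n = φ_{n-2}`: the Fibonacci sequence shifted so as to start at index `-2`. -/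
def phiAux : ℕ → ℤ
  | 0 => -1
  | 1 => 1
  | n + 2 => phiAux (n + 1) + phiAux n

/-- `φ_k` for integer `k ≥ -2`: `φ_{-2} = -1`, `φ_{-1} = 1`, `φ_{k+1} = φ_k + φ_{k-1}`. -/
def phi (k : ℤ) : ℤ := phiAux (k + 2).toNat

/-- `psiAux n = ψ_{n-2}`: the Lucas sequence shifted so as to start at index `-2`. -/
def psiAux : ℕ → ℤ
  | 0 => 3
  | 1 => -1
  | n + 2 => psiAux (n + 1) + psiAux n

/-- `ψ_k` for integer `k ≥ -2`: `ψ_{-2} = 3`, `ψ_{-1} = -1`, `ψ_{k+1} = ψ_k + ψ_{k-1}`. -/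
def psi (k : ℤ) : ℤ := psiAux (k + 2).toNat

/-- `piAux n = π_{n-1}`. -/
def piAux : ℕ → ℤ
  | 0 => 1
  | 1 => 0
  | n + 2 => 2 * piAux (n + 1) + piAux n

/-- `π_k` for integer `k ≥ -1`: `π_{-1} = 1`, `π_0 = 0`, `π_{k+1} = 2π_k + π_{k-1}`. -/
def piSeq (k : ℤ) : ℤ := piAux (k + 1).toNat

/-- `rhoAux n = ρ_{n-1}`. -/
def rhoAux : ℕ → ℤ
  | 0 => -1
  | 1 => 1
  | n + 2 => 2 * rhoAux (n + 1) + rhoAux n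

/-- `ρ_k` for integer `k ≥ -1`: `ρ_{-1} = -1`, `ρ_0 = 1`, `ρ_{k+1} = 2ρ_k + ρ_{k-1}`. -/
def rhoSeq (k : ℤ) : ℤ := rhoAux (k + 1).toNat

/-- `zetaAux i n = ζ^{(i)}_{n-1}`. -/
def zetaAux (i : ℕ) : ℕ → ℤ
  | 0 => if i = 0 then -1 else if i = 1 then 2 else if i = 2 then 1 else -1
  | 1 => if i = 0 then 0 else 1
  | n + 2 => 4 * zetaAux i (n + 1) - zetaAux i n

/-- `ζ^{(i)}_k` for integer `k ≥ -1`, satisfying `ζ^{(i)}_{k+1} = 4ζ^{(i)}_k - ζ^{(i)}_{k-1}`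
with initial values `(ζ^{(i)}_{-1}, ζ^{(i)}_0)` equal to `(-1, 0)`, `(2, 1)`, `(1, 1)`,
`(-1, 1)` for `i = 0, 1, 2, 3` respectively. -/
def zeta (i : ℕ) (k : ℤ) : ℤ := zetaAux i (k + 1).toNat

/-- The set `L` of pairs `(a, b)` from the `n = 5` entry of the classification table. -/
def InL5 (a b : ℤ) : Prop :=
  (∃ k ε : ℤ, (ε = 1 ∨ ε = -1) ∧ 3 ≤ k ∧
    a = phi (k - 2 * ε) ∧ b = phi (k - 2 * ε) - 4 * phi k) ∨
  (∃ k ε : ℤ, (ε = 1 ∨ ε = -1) ∧ 0 ≤ k ∧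
    ¬ ((k = 0 ∧ ε = -1) ∨ (k = 1 ∧ ε = -1)) ∧
    a = psi (k - 2 * ε) ∧ b = psi (k - 2 * ε) - 4 * psi k)

theorem csqrt_sq_aux (a : ℤ) : csqrt a ^ 2 = (a : ℂ) := by
  unfold csqrt
  rw [← Complex.cpow_nat_mul]
  norm_num

theorem phiAux_pos_aux (n : ℕ) : 0 < phiAux (n + 3) ∧ 0 < phiAux (n + 4) := by
  induction n with
  | zero => simp [phiAux]
  | succ n ih =>
    refine ⟨ih.2, ?_⟩
    have : phiAux (n + 1 + 4) = phiAux (n + 4) + phiAux (n + 3) := rfl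
    omega

theorem psiAux_pos_aux (n : ℕ) : 0 < psiAux (n + 2) ∧ 0 < psiAux (n + 3) := by
  induction n with
  | zero => simp [psiAux]
  | succ n ih =>
    refine ⟨ih.2, ?_⟩
    have : psiAux (n + 1 + 3) = psiAux (n + 3) + psiAux (n + 2) := rfl
    omega

theorem inL5_lt_aux (a b : ℤ) (h : InL5 a b) : b < a := by
  rcases h with ⟨k, ε, -, hk, ha, hb⟩ | ⟨k, ε, -, hk, -, ha, hb⟩
  · have h1 := (phiAux_pos_aux (k - 1).toNat).1
    have h2 : (k + 2).toNat = (k - 1).toNat + 3 := by omega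
    have h3 : 0 < phi k := by unfold phi; rw [h2]; exact h1
    omega
  · have h1 := (psiAux_pos_aux k.toNat).1
    have h2 : (k + 2).toNat = k.toNat + 2 := by omega
    have h3 : 0 < psi k := by unfold psi; rw [h2]; exact h1
    omega

theorem five_defective_pairs_inequiv (a₁ b₁ a₂ b₂ : ℤ)
    (h₁ : InL5 a₁ b₁) (h₂ : InL5 a₂ b₂) (hne : (a₁, b₁) ≠ (a₂, b₂)) :
    ¬ LehmerEquiv (assocFst a₁ b₁) (assocSnd a₁ b₁)
      (assocFst a₂ b₂) (assocSnd a₂ b₂) := by 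
  rintro ⟨c, hc, h3, h4⟩
  have l1 := inL5_lt_aux _ _ h₁
  have l2 := inL5_lt_aux _ _ h₂
  unfold assocFst at h3
  unfold assocSnd at h4
  have ea : csqrt a₁ = c * csqrt a₂ := by linear_combination h3 + h4
  have eb : csqrt b₁ = c * csqrt b₂ := by linear_combination h4 - h3
  have ea2 : (a₁ : ℂ) = c ^ 2 * a₂ := by
    rw [← csqrt_sq_aux, ← csqrt_sq_aux, ea]; ring
  have eb2 : (b₁ : ℂ) = c ^ 2 * b₂ := by
    rw [← csqrt_sq_aux, ← csqrt_sq_aux, eb]; ring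
  have hc2 : c ^ 2 = 1 ∨ c ^ 2 = -1 := by
    rcases hc with rfl | rfl | rfl | rfl <;> simp
  rcases hc2 with h | h
  · rw [h, one_mul] at ea2 eb2
    exact hne (Prod.ext (by exact_mod_cast ea2) (by exact_mod_cast eb2))
  · rw [h] at ea2 eb2
    have e1 : a₁ = -1 * a₂ := by exact_mod_cast ea2
    have e2 : b₁ = -1 * b₂ := by exact_mod_cast eb2
    omega
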